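/- arXiv:2602.09429 — 6 statements merged into one kernel-verified Lean document; each statement's English description precedes it below -/
import Mathlib

section
/- Suppose σ0(w) > 0 for all w ∈ ℝ and that there exist constants μ̄_min, μ̄_max > 0 with μ̄_min ≤ μ(w)/σ0(w) ≤ μ̄_max for all w ∈ ℝ. Let v : [0,∞) → ℝ be continuous and let z : [0,∞) → ℝ be the solution of the lumped FrBD bristle ODE ż(t) = -(σ0(v(t)) |v(t)|_ε / g(v(t))) z(t) + (μ(v(t))/g(v(t))) v(t) with initial condition z(0) = z₀ satisfying |z₀| ≤ μ̄_max. Then |z(t)| ≤ μ̄_max for all t ≥ 0. -/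
open Set

/-- Stability (invariance) of the lumped FrBD bristle ODE: if
`μ̄_min ≤ μ(w)/σ0(w) ≤ μ̄_max` for all `w` and the initial condition satisfies
`|z₀| ≤ μ̄_max`, then `|z(t)| ≤ μ̄_max` for all `t ≥ 0`. -/
theorem frbd_lumped_stability
    (ε μmin : ℝ) (hε : 0 < ε) (hμmin : 0 < μmin)
    (μ σ0 σ1 : ℝ → ℝ)
    (hμ : ContDiff ℝ 1 μ) (hμlb : ∀ w, μmin ≤ μ w)
    (hσ0 : ContDiff ℝ 1 σ0) (hσ0pos : ∀ w, 0 < σ0 w)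
    (hσ1 : ContDiff ℝ 1 σ1) (hσ1nn : ∀ w, 0 ≤ σ1 w)
    (g : ℝ → ℝ) (hg : ∀ w, g w = σ1 w * Real.sqrt (w ^ 2 + ε) + μ w)
    (μbmin μbmax : ℝ) (hμbmin : 0 < μbmin) (hμbmax : 0 < μbmax)
    (hratio : ∀ w, μbmin ≤ μ w / σ0 w ∧ μ w / σ0 w ≤ μbmax)
    (v : ℝ → ℝ) (hv : ContinuousOn v (Ici 0))
    (z : ℝ → ℝ) (z₀ : ℝ) (hz0 : z 0 = z₀) (hz0bd : |z₀| ≤ μbmax)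
    (hODE : ∀ t ∈ Ici (0 : ℝ),
      HasDerivWithinAt z
        (-(σ0 (v t) * Real.sqrt ((v t) ^ 2 + ε) / g (v t)) * z t
          + (μ (v t) / g (v t)) * v t) (Ici 0) t) :
    ∀ t ∈ Ici (0 : ℝ), |z t| ≤ μbmax := by
  have key : ∀ w, |(μ w / g w) * w| < σ0 w * Real.sqrt (w ^ 2 + ε) / g w * μbmax := by
    intro w
    have hμp : 0 < μ w := lt_of_lt_of_le hμmin (hμlb w)
    have hgp : 0 < g w := by
      rw [hg]
      have := mul_nonneg (hσ1nn w) (Real.sqrt_nonneg (w ^ 2 + ε))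
      linarith
    have hs : |w| < Real.sqrt (w ^ 2 + ε) := by
      apply Real.lt_sqrt_of_sq_lt
      rw [sq_abs]
      linarith
    have h2 : μ w ≤ μbmax * σ0 w := (div_le_iff₀ (hσ0pos w)).1 (hratio w).2
    have h1 : μ w * |w| < σ0 w * Real.sqrt (w ^ 2 + ε) * μbmax := by
      calc μ w * |w| < μ w * Real.sqrt (w ^ 2 + ε) := mul_lt_mul_of_pos_left hs hμp
        _ ≤ (μbmax * σ0 w) * Real.sqrt (w ^ 2 + ε) :=
          mul_le_mul_of_nonneg_right h2 (Real.sqrt_nonneg _)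
        _ = _ := by ring
    rw [abs_mul, abs_of_pos (div_pos hμp hgp), div_mul_eq_mul_div, div_mul_eq_mul_div]
    exact div_lt_div_of_pos_right h1 hgp
  intro t ht
  have ht0 : (0 : ℝ) ≤ t := ht
  have hc : ContinuousOn z (Icc 0 t) := fun x hx =>
    (hODE x hx.1).continuousWithinAt.mono Icc_subset_Ici_self
  have hd : ∀ x ∈ Ico (0 : ℝ) t, HasDerivWithinAt z
        (-(σ0 (v x) * Real.sqrt ((v x) ^ 2 + ε) / g (v x)) * z x
          + (μ (v x) / g (v x)) * v x) (Ici x) x := fun x hx =>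
    (hODE x hx.1).mono (Ici_subset_Ici.2 hx.1)
  rw [← hz0] at hz0bd
  rw [abs_le] at hz0bd ⊢
  constructor
  · have h := image_le_of_deriv_right_lt_deriv_boundary (f := fun x => -z x) (a := 0) (b := t)
      (B := fun _ => μbmax) (B' := fun _ => 0) hc.neg (fun x hx => (hd x hx).neg)
      (by linarith [hz0bd.1]) (fun x => hasDerivAt_const x _)
      (by
        intro x hx hzx
        have hz : z x = -μbmax := by linarith
        have := (abs_lt.1 (key (v x))).1
        rw [hz]
        linarith)
    have := h (right_mem_Icc.2 ht0)
    linarith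
  · exact image_le_of_deriv_right_lt_deriv_boundary (f := z) (a := 0) (b := t)
      (B := fun _ => μbmax) (B' := fun _ => 0) hc hd
      hz0bd.2 (fun x => hasDerivAt_const x _)
      (by
        intro x hx hzx
        have hz : z x = μbmax := hzx
        have := (abs_lt.1 (key (v x))).2
        rw [hz]
        linarith) (right_mem_Icc.2 ht0)
end

section
/- Suppose σ0(w) = σ0 > 0 is constant. Let v : [0,T] → ℝ be continuous, let z : [0,T] → ℝ solve the lumped FrBD bristle ODE, define the bristle force F_b(t) := p·(σ0 z(t) + σ1(v(t)) ż(t)) with p > 0, set Σ0 := σ0 p and W(z) := (Σ0/2) z². Then for all t ∈ (0,T): F_b(t) v(t) - d/dt[W(z(t))] = Σ0 σ0 (|v(t)|_ε / g(v(t))) z(t)² + p σ1(v(t)) (μ(v(t))/g(v(t))) v(t)²; in particular F_b(t) v(t) ≥ d/dt[W(z(t))]. -/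
open Set

/-- Pointwise energy balance for the lumped FrBD model with constant micro-stiffness
`σ0 > 0`: along any solution `z` of the bristle ODE, with `F_b = p (σ0 z + σ1(v) ż)`,
`Sigma0 = σ0 p` and `W(z) = (Sigma0/2) z²`, one has
`F_b v - d/dt W(z(t)) = Sigma0 σ0 (|v|_ε/g(v)) z² + p σ1(v) (μ(v)/g(v)) v²`,
and in particular `F_b v ≥ d/dt W(z(t))`. -/
theorem frbd_lumped_energy_balance
    (T ε μmin σ0 p : ℝ) (hT : 0 < T) (hε : 0 < ε) (hμmin : 0 < μmin)
    (hσ0 : 0 < σ0) (hp : 0 < p)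
    (μ σ1 : ℝ → ℝ)
    (hμ : ContDiff ℝ 1 μ) (hμlb : ∀ w, μmin ≤ μ w)
    (hσ1 : ContDiff ℝ 1 σ1) (hσ1nn : ∀ w, 0 ≤ σ1 w)
    (g : ℝ → ℝ) (hg : ∀ w, g w = σ1 w * Real.sqrt (w ^ 2 + ε) + μ w)
    (v : ℝ → ℝ) (hv : ContinuousOn v (Icc 0 T))
    (z : ℝ → ℝ)
    (hODE : ∀ t ∈ Icc 0 T,
      HasDerivWithinAt z
        (-(σ0 * Real.sqrt ((v t) ^ 2 + ε) / g (v t)) * z t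
          + (μ (v t) / g (v t)) * v t) (Icc 0 T) t)
    (Fb : ℝ → ℝ) (hFb : ∀ t, Fb t = p * (σ0 * z t + σ1 (v t) * deriv z t))
    (Sigma0 : ℝ) (hSigma0 : Sigma0 = σ0 * p)
    (W : ℝ → ℝ) (hW : ∀ x, W x = Sigma0 / 2 * x ^ 2) :
    ∀ t ∈ Ioo 0 T,
      Fb t * v t - deriv (fun s => W (z s)) t =
        Sigma0 * σ0 * (Real.sqrt ((v t) ^ 2 + ε) / g (v t)) * z t ^ 2
          + p * σ1 (v t) * (μ (v t) / g (v t)) * v t ^ 2 ∧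
      deriv (fun s => W (z s)) t ≤ Fb t * v t := by
  intro t ht
  have hz := (hODE t (Ioo_subset_Icc_self ht)).hasDerivAt (Icc_mem_nhds ht.1 ht.2)
  have hd := ((hz.pow 2).const_mul (Sigma0 / 2)).deriv
  have hfun : (fun s => W (z s)) = fun s => Sigma0 / 2 * (z ^ 2) s := by
    funext s
    simp [hW]
  have hgv := hg (v t)
  have hs : 0 ≤ Real.sqrt ((v t) ^ 2 + ε) := Real.sqrt_nonneg _
  have hμ0 : 0 < μ (v t) := lt_of_lt_of_le hμmin (hμlb _)
  have hs1 := hσ1nn (v t)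
  have hg0 : 0 < g (v t) := by rw [hgv]; positivity
  have key : Fb t * v t - deriv (fun s => W (z s)) t =
        Sigma0 * σ0 * (Real.sqrt ((v t) ^ 2 + ε) / g (v t)) * z t ^ 2
          + p * σ1 (v t) * (μ (v t) / g (v t)) * v t ^ 2 := by
    rw [hfun, hd, hFb, hz.deriv, hSigma0]
    generalize Real.sqrt ((v t) ^ 2 + ε) = a at *
    have hne := hg0.ne'
    have hm : μ (v t) = g (v t) - σ1 (v t) * a := by linarith
    rw [hm]
    field_simp
    push_cast
    ring
  refine ⟨key, ?_⟩
  have : 0 ≤ Sigma0 * σ0 * (Real.sqrt ((v t) ^ 2 + ε) / g (v t)) * z t ^ 2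
          + p * σ1 (v t) * (μ (v t) / g (v t)) * v t ^ 2 := by
    rw [hSigma0]; positivity
  linarith
end

section
/- Suppose σ0(w) = σ0 > 0 is constant. Let v : [0,T] → ℝ be continuous, let z : [0,T] → ℝ solve the lumped FrBD bristle ODE with z(0) = z₀, define the bristle force F_b(t) := p·(σ0 z(t) + σ1(v(t)) ż(t)) with p > 0, set Σ0 := σ0 p and W(z) := (Σ0/2) z². Then the passivity inequality ∫_0^t F_b(t') v(t') dt' ≥ W(z(t)) - W(z₀) holds for all t ∈ [0,T]. -/
open Set intervalIntegral

/-- Passivity of the lumped FrBD model with constant micro-stiffness `σ0 > 0`: along any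
solution `z` of the bristle ODE on `[0,T]` with `z(0) = z₀`, the bristle force
`F_b = p (σ0 z + σ1(v) ż)` satisfies `∫_0^t F_b v ≥ W(z(t)) - W(z₀)` where
`W(z) = (Σ0/2) z²` and `Σ0 = σ0 p`. -/
theorem frbd_lumped_passivity
    (T ε μmin σ0 p : ℝ) (hT : 0 < T) (hε : 0 < ε) (hμmin : 0 < μmin)
    (hσ0 : 0 < σ0) (hp : 0 < p)
    (μ σ1 : ℝ → ℝ)
    (hμ : ContDiff ℝ 1 μ) (hμlb : ∀ w, μmin ≤ μ w)
    (hσ1 : ContDiff ℝ 1 σ1) (hσ1nn : ∀ w, 0 ≤ σ1 w)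
    (g : ℝ → ℝ) (hg : ∀ w, g w = σ1 w * Real.sqrt (w ^ 2 + ε) + μ w)
    (v : ℝ → ℝ) (hv : ContinuousOn v (Icc 0 T))
    (z : ℝ → ℝ) (z₀ : ℝ) (hz0 : z 0 = z₀)
    (hODE : ∀ t ∈ Icc 0 T,
      HasDerivWithinAt z
        (-(σ0 * Real.sqrt ((v t) ^ 2 + ε) / g (v t)) * z t
          + (μ (v t) / g (v t)) * v t) (Icc 0 T) t)
    (Fb : ℝ → ℝ)
    (hFb : ∀ t, Fb t = p * (σ0 * z t + σ1 (v t) * derivWithin z (Icc 0 T) t))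
    (Sigma0 : ℝ) (hSigma0 : Sigma0 = σ0 * p)
    (W : ℝ → ℝ) (hW : ∀ x, W x = Sigma0 / 2 * x ^ 2) :
    ∀ t ∈ Icc 0 T, W (z t) - W z₀ ≤ ∫ s in (0 : ℝ)..t, Fb s * v s := by
  intro t ht
  have hgpos : ∀ w, 0 < g w := by
    intro w
    have h1 := mul_nonneg (hσ1nn w) (Real.sqrt_nonneg (w ^ 2 + ε))
    have h2 := hμlb w
    rw [hg]; linarith
  have hdw : ∀ s ∈ Icc 0 T, derivWithin z (Icc 0 T) s =
      -(σ0 * Real.sqrt ((v s) ^ 2 + ε) / g (v s)) * z s + (μ (v s) / g (v s)) * v s :=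
    fun s hs => (hODE s hs).derivWithin (uniqueDiffOn_Icc hT s hs)
  have hzc : ContinuousOn z (Icc 0 T) := fun s hs => (hODE s hs).continuousWithinAt
  have hμc : ContinuousOn (fun s => μ (v s)) (Icc 0 T) := hμ.continuous.comp_continuousOn hv
  have hσc : ContinuousOn (fun s => σ1 (v s)) (Icc 0 T) := hσ1.continuous.comp_continuousOn hv
  have hsc : ContinuousOn (fun s => Real.sqrt ((v s) ^ 2 + ε)) (Icc 0 T) :=
    Real.continuous_sqrt.comp_continuousOn ((hv.pow 2).add continuousOn_const)
  have hgc : ContinuousOn (fun s => g (v s)) (Icc 0 T) := by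
    simp only [hg]
    exact (hσc.mul hsc).add hμc
  have hne : ∀ s ∈ Icc 0 T, g (v s) ≠ 0 := fun s _ => (hgpos _).ne'
  have hdc : ContinuousOn (derivWithin z (Icc 0 T)) (Icc 0 T) := by
    refine ContinuousOn.congr ?_ hdw
    exact (((continuousOn_const.mul hsc).div hgc hne).neg.mul hzc).add
      ((hμc.div hgc hne).mul hv)
  have hFc : ContinuousOn (fun s => Fb s * v s) (Icc 0 T) := by
    simp only [hFb]
    exact (continuousOn_const.mul ((continuousOn_const.mul hzc).add (hσc.mul hdc))).mul hv
  have hsub : Icc 0 t ⊆ Icc 0 T := Icc_subset_Icc_right ht.2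
  have key := sub_le_integral_of_hasDeriv_right_of_le (g := fun s => Sigma0 / 2 * z s ^ 2)
    (g' := fun s => Sigma0 * z s * derivWithin z (Icc 0 T) s)
    (φ := fun s => Fb s * v s) ht.1
    ((continuousOn_const.mul (hzc.pow 2)).mono hsub) ?_
    ((hFc.mono hsub).integrableOn_Icc) ?_
  · simpa [hW, hz0] using key
  · intro s hs
    have hs' : s ∈ Ioo 0 T := ⟨hs.1, hs.2.trans_le ht.2⟩
    have h1 := (hODE s (Ioo_subset_Icc_self hs')).hasDerivAt (Icc_mem_nhds hs'.1 hs'.2)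
    rw [← hdw s (Ioo_subset_Icc_self hs')] at h1
    have h2 := ((h1.pow 2).const_mul (Sigma0 / 2)).hasDerivWithinAt (s := Ioi s)
    refine HasDerivWithinAt.congr_deriv h2 ?_
    push_cast
    ring
  · intro s hs
    have hs' : s ∈ Icc 0 T := ⟨hs.1.le, (hs.2.trans_le ht.2).le⟩
    simp only [hFb, hSigma0, hdw s hs']
    have hgp := hgpos (v s)
    have hge := hg (v s)
    have hs0 := Real.sqrt_nonneg ((v s) ^ 2 + ε)
    have hm : 0 ≤ μ (v s) := hμmin.le.trans (hμlb _)
    have h1 := hσ1nn (v s)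
    generalize Real.sqrt ((v s) ^ 2 + ε) = r at *
    generalize g (v s) = G at *
    generalize μ (v s) = m at *
    generalize σ1 (v s) = c at *
    rw [← sub_nonneg]
    have : 0 ≤ p * (c * m * v s ^ 2 + σ0 ^ 2 * r * z s ^ 2) / G := by positivity
    convert this using 1
    have hG := hgp.ne'
    field_simp
    rw [hge]
    ring
end

section
/- Suppose σ0(w) = σ0 > 0 is constant, and let v : [0,∞) → ℝ be continuous with |v(t)| ≤ V_max for all t. Set g_max := sup_{|w| ≤ V_max} g(w), μ̄_max := sup_{|w| ≤ V_max} μ(w)/σ0, and λ := σ0 √ε / g_max > 0. Then the solution z of the lumped FrBD bristle ODE with z(0) = z₀ satisfies the input-to-state estimate |z(t)| ≤ e^{-λ t} |z₀| + μ̄_max for all t ≥ 0. -/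
open Set

theorem frbd_aux (z a b : ℝ → ℝ) (lam M c : ℝ) (hc : 0 ≤ c) (hM : 0 ≤ M) (h0 : z 0 ≤ c)
    (hz : ∀ t ∈ Ici (0 : ℝ), HasDerivWithinAt z (-(a t) * z t + b t) (Ici 0) t)
    (ha : ∀ t ∈ Ici (0 : ℝ), lam ≤ a t) (hb : ∀ t ∈ Ici (0 : ℝ), b t < a t * M) :
    ∀ t ∈ Ici (0 : ℝ), z t ≤ Real.exp (-lam * t) * c + M := by
  intro t ht
  refine image_le_of_deriv_right_lt_deriv_boundary (a := 0) (b := t)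
    (f' := fun t => -(a t) * z t + b t)
    (B := fun t => Real.exp (-lam * t) * c + M)
    (B' := fun t => Real.exp (-lam * t) * (-lam) * c) ?_ ?_ ?_ ?_ ?_ ⟨ht, le_refl t⟩
  · intro x hx
    exact ((hz x hx.1).continuousWithinAt).mono Icc_subset_Ici_self
  · intro x hx
    exact (hz x hx.1).mono (Ici_subset_Ici.2 hx.1)
  · simp
    linarith
  · intro x
    have h : HasDerivAt (fun t : ℝ => -lam * t) (-lam) x := by
      simpa using (hasDerivAt_id x).const_mul (-lam)
    exact (h.exp.mul_const c).add_const M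
  · intro x hx h
    have h1 := ha x hx.1
    have h2 := hb x hx.1
    have h3 : 0 ≤ Real.exp (-lam * x) * c := by positivity
    rw [h]
    nlinarith [mul_le_mul_of_nonneg_right h1 h3]

/-- Input-to-state stability estimate for the lumped FrBD bristle ODE with constant
micro-stiffness `σ0 > 0` and bounded input `|v(t)| ≤ V_max`: with
`g_max = sup_{|w| ≤ V_max} g(w)`, `μ̄_max = sup_{|w| ≤ V_max} μ(w)/σ0` and
`λ = σ0 √ε / g_max > 0`, the solution satisfies
`|z(t)| ≤ e^{-λ t} |z₀| + μ̄_max` for all `t ≥ 0`. -/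
theorem frbd_lumped_iss
    (ε μmin σ0 : ℝ) (hε : 0 < ε) (hμmin : 0 < μmin) (hσ0 : 0 < σ0)
    (μ σ1 : ℝ → ℝ)
    (hμ : ContDiff ℝ 1 μ) (hμlb : ∀ w, μmin ≤ μ w)
    (hσ1 : ContDiff ℝ 1 σ1) (hσ1nn : ∀ w, 0 ≤ σ1 w)
    (g : ℝ → ℝ) (hg : ∀ w, g w = σ1 w * Real.sqrt (w ^ 2 + ε) + μ w)
    (v : ℝ → ℝ) (hv : ContinuousOn v (Ici 0))
    (Vmax : ℝ) (hvbd : ∀ t ∈ Ici (0 : ℝ), |v t| ≤ Vmax)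
    (gmax : ℝ) (hgmax : gmax = sSup (g '' Icc (-Vmax) Vmax))
    (μbmax : ℝ) (hμbmax : μbmax = sSup ((fun w => μ w / σ0) '' Icc (-Vmax) Vmax))
    (lam : ℝ) (hlam : lam = σ0 * Real.sqrt ε / gmax)
    (z : ℝ → ℝ) (z₀ : ℝ) (hz0 : z 0 = z₀)
    (hODE : ∀ t ∈ Ici (0 : ℝ),
      HasDerivWithinAt z
        (-(σ0 * Real.sqrt ((v t) ^ 2 + ε) / g (v t)) * z t
          + (μ (v t) / g (v t)) * v t) (Ici 0) t) :
    0 < lam ∧ ∀ t ∈ Ici (0 : ℝ), |z t| ≤ Real.exp (-lam * t) * |z₀| + μbmax := by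
  have hgc : Continuous g := by
    have : g = fun w => σ1 w * Real.sqrt (w ^ 2 + ε) + μ w := funext hg
    rw [this]
    have := hμ.continuous
    have := hσ1.continuous
    fun_prop
  have hmem : ∀ t ∈ Ici (0 : ℝ), v t ∈ Icc (-Vmax) Vmax := fun t ht => abs_le.1 (hvbd t ht)
  have hgle : ∀ w ∈ Icc (-Vmax) Vmax, g w ≤ gmax := fun w hw => by
    rw [hgmax]
    exact le_csSup (isCompact_Icc.image hgc).bddAbove (mem_image_of_mem _ hw)
  have hμle : ∀ w ∈ Icc (-Vmax) Vmax, μ w / σ0 ≤ μbmax := fun w hw => by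
    rw [hμbmax]
    exact le_csSup (isCompact_Icc.image (hμ.continuous.div_const σ0)).bddAbove
      (mem_image_of_mem (fun w => μ w / σ0) hw)
  have hμpos : ∀ w, 0 < μ w := fun w => hμmin.trans_le (hμlb w)
  have hgpos : ∀ w, 0 < g w := fun w => by
    rw [hg]
    have := mul_nonneg (hσ1nn w) (Real.sqrt_nonneg (w ^ 2 + ε))
    linarith [hμpos w]
  have h00 : (0 : ℝ) ∈ Ici (0 : ℝ) := self_mem_Ici
  have hgm : 0 < gmax := (hgpos _).trans_le (hgle _ (hmem 0 h00))
  have hM : 0 ≤ μbmax := (div_pos (hμpos _) hσ0).le.trans (hμle _ (hmem 0 h00))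
  have ha : ∀ t ∈ Ici (0 : ℝ), lam ≤ σ0 * Real.sqrt ((v t) ^ 2 + ε) / g (v t) := by
    intro t ht
    rw [hlam]
    have h1 := hgle _ (hmem t ht)
    have h2 := hgpos (v t)
    have h3 : Real.sqrt ε ≤ Real.sqrt ((v t) ^ 2 + ε) :=
      Real.sqrt_le_sqrt (by nlinarith [sq_nonneg (v t)])
    gcongr
  have hb : ∀ t ∈ Ici (0 : ℝ), |μ (v t) / g (v t) * v t|
      < σ0 * Real.sqrt ((v t) ^ 2 + ε) / g (v t) * μbmax := by
    intro t ht
    have h1 := hμle _ (hmem t ht)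
    have h2 := hgpos (v t)
    have h4 := hμpos (v t)
    have h3 : |v t| < Real.sqrt ((v t) ^ 2 + ε) := by
      apply Real.lt_sqrt_of_sq_lt
      rw [sq_abs]
      linarith
    rw [abs_mul, abs_of_pos (div_pos h4 h2)]
    calc μ (v t) / g (v t) * |v t| < μ (v t) / g (v t) * Real.sqrt ((v t) ^ 2 + ε) :=
          mul_lt_mul_of_pos_left h3 (div_pos h4 h2)
      _ = σ0 * Real.sqrt ((v t) ^ 2 + ε) / g (v t) * (μ (v t) / σ0) := by
          field_simp
      _ ≤ _ := by
          gcongr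
  refine ⟨by rw [hlam]; have := Real.sqrt_pos.2 hε; positivity, ?_⟩
  intro t ht
  rw [abs_le']
  constructor
  · exact frbd_aux z _ _ lam μbmax |z₀| (abs_nonneg _) hM (hz0 ▸ le_abs_self _) hODE ha
      (fun t ht => (le_abs_self _).trans_lt (hb t ht)) t ht
  · refine frbd_aux (fun t => -z t) (fun t => σ0 * Real.sqrt ((v t) ^ 2 + ε) / g (v t))
      (fun t => -(μ (v t) / g (v t) * v t)) lam μbmax |z₀| (abs_nonneg _) hM
      (hz0 ▸ neg_le_abs _) ?_ ha
      (fun t ht => (neg_le_abs _).trans_lt (hb t ht)) t ht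
    intro t ht
    refine (hODE t ht).neg.congr_deriv ?_
    ring
end

section
/- Let T > 0, let v : [0,T] → ℝ be continuous, let V ∈ C¹([0,1]; (0,∞)), p ∈ C¹([0,1]; [0,∞)), σ0 ∈ C¹([0,1]; [0,∞)), let σ1 : ℝ × [0,1] → [0,∞) be continuous, set g(v,ξ) := σ1(v,ξ)|v|_ε + μ(v), and suppose Σ0 := σ0·p satisfies the passivity condition dΣ0/dξ (ξ) ≤ -(Σ0(ξ)/V(ξ)) dV/dξ (ξ) for all ξ ∈ [0,1]. Let z : [0,1] × [0,T] → ℝ be continuously differentiable, satisfy the boundary condition z(0,t) = 0 for all t, and satisfy the distributed FrBD PDE ∂_t z + V(ξ) ∂_ξ z = -(σ0(ξ)|v(t)|_ε/g(v(t),ξ)) z + (μ(v(t))/g(v(t),ξ)) v(t) pointwise on (0,1)×(0,T). Define μ_b(ξ,t) := σ0(ξ) z(ξ,t) + σ1(v(t),ξ)(∂_t z + V(ξ)∂_ξ z)(ξ,t), F_b(t) := L ∫_0^1 p(ξ) μ_b(ξ,t) dξ with L > 0, and W(t) := (L/2) ∫_0^1 Σ0(ξ) z(ξ,t)² dξ.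 Then F_b(t) v(t) ≥ dW/dt (t) for all t ∈ (0,T). -/
open Set intervalIntegral

/-- Passivity (differential form) of the distributed FrBD model: if the
velocity-independent micro-stiffness `Σ0 = σ0 p` satisfies
`dΣ0/dξ ≤ -(Σ0/V) dV/dξ` on `[0,1]`, then along any `C¹` solution `z` of the distributed
FrBD PDE with boundary condition `z(0,t) = 0`, the total bristle force
`F_b(t) = L ∫_0^1 p (σ0 z + σ1(v)(∂_t z + V ∂_ξ z))` and the storage functional
`W(t) = (L/2) ∫_0^1 Σ0 z²` satisfy `F_b(t) v(t) ≥ dW/dt(t)` on `(0,T)`. -/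
theorem frbd_distributed_passivity_differential
    (T L ε μmin : ℝ) (hT : 0 < T) (hL : 0 < L) (hε : 0 < ε) (hμmin : 0 < μmin)
    (μ : ℝ → ℝ) (hμ : ContDiff ℝ 1 μ) (hμlb : ∀ w, μmin ≤ μ w)
    (v : ℝ → ℝ) (hv : ContinuousOn v (Icc 0 T))
    (V p σ0 : ℝ → ℝ)
    (hV : ContDiffOn ℝ 1 V (Icc 0 1)) (hVpos : ∀ ξ ∈ Icc (0 : ℝ) 1, 0 < V ξ)
    (hp : ContDiffOn ℝ 1 p (Icc 0 1)) (hpnn : ∀ ξ ∈ Icc (0 : ℝ) 1, 0 ≤ p ξ)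
    (hσ0 : ContDiffOn ℝ 1 σ0 (Icc 0 1)) (hσ0nn : ∀ ξ ∈ Icc (0 : ℝ) 1, 0 ≤ σ0 ξ)
    (σ1 : ℝ → ℝ → ℝ) (hσ1 : Continuous fun q : ℝ × ℝ => σ1 q.1 q.2)
    (hσ1nn : ∀ w ξ, 0 ≤ σ1 w ξ)
    (g : ℝ → ℝ → ℝ) (hg : ∀ w ξ, g w ξ = σ1 w ξ * Real.sqrt (w ^ 2 + ε) + μ w)
    (Sigma0 : ℝ → ℝ) (hSigma0 : ∀ ξ, Sigma0 ξ = σ0 ξ * p ξ)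
    (hpassiv : ∀ ξ ∈ Icc (0 : ℝ) 1,
      derivWithin Sigma0 (Icc 0 1) ξ ≤ -(Sigma0 ξ / V ξ) * derivWithin V (Icc 0 1) ξ)
    (z zt zξ : ℝ → ℝ → ℝ)
    (hzc : ContinuousOn (fun q : ℝ × ℝ => z q.1 q.2) (Icc 0 1 ×ˢ Icc 0 T))
    (hztc : ContinuousOn (fun q : ℝ × ℝ => zt q.1 q.2) (Icc 0 1 ×ˢ Icc 0 T))
    (hzξc : ContinuousOn (fun q : ℝ × ℝ => zξ q.1 q.2) (Icc 0 1 ×ˢ Icc 0 T))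
    (hzt : ∀ ξ ∈ Icc (0 : ℝ) 1, ∀ t ∈ Icc (0 : ℝ) T,
      HasDerivWithinAt (fun τ => z ξ τ) (zt ξ t) (Icc 0 T) t)
    (hzξ : ∀ ξ ∈ Icc (0 : ℝ) 1, ∀ t ∈ Icc (0 : ℝ) T,
      HasDerivWithinAt (fun x => z x t) (zξ ξ t) (Icc 0 1) ξ)
    (hBC : ∀ t ∈ Icc (0 : ℝ) T, z 0 t = 0)
    (hPDE : ∀ ξ ∈ Ioo (0 : ℝ) 1, ∀ t ∈ Ioo (0 : ℝ) T,
      zt ξ t + V ξ * zξ ξ t =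
        -(σ0 ξ * Real.sqrt ((v t) ^ 2 + ε) / g (v t) ξ) * z ξ t
          + (μ (v t) / g (v t) ξ) * v t)
    (Fb : ℝ → ℝ)
    (hFb : ∀ t, Fb t = L * ∫ ξ in (0 : ℝ)..1,
      p ξ * (σ0 ξ * z ξ t + σ1 (v t) ξ * (zt ξ t + V ξ * zξ ξ t)))
    (W : ℝ → ℝ)
    (hW : ∀ t, W t = L / 2 * ∫ ξ in (0 : ℝ)..1, Sigma0 ξ * (z ξ t) ^ 2) :
    ∀ t ∈ Ioo (0 : ℝ) T, DifferentiableAt ℝ W t ∧ deriv W t ≤ Fb t * v t := by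
  intro t ht
  have htI : t ∈ Icc (0:ℝ) T := Ioo_subset_Icc_self ht
  have hSeq : Sigma0 = fun ξ => σ0 ξ * p ξ := funext hSigma0
  have hSd : ContDiffOn ℝ 1 Sigma0 (Icc 0 1) := by rw [hSeq]; exact hσ0.mul hp
  have hSc := hSd.continuousOn
  have hSnn : ∀ ξ ∈ Icc (0:ℝ) 1, 0 ≤ Sigma0 ξ := fun ξ h => by
    rw [hSigma0]; exact mul_nonneg (hσ0nn ξ h) (hpnn ξ h)
  have slice : ∀ f : ℝ → ℝ → ℝ, ContinuousOn (fun q : ℝ × ℝ => f q.1 q.2) (Icc 0 1 ×ˢ Icc 0 T) →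
      ∀ s ∈ Icc (0:ℝ) T, ContinuousOn (fun ξ => f ξ s) (Icc 0 1) := by
    intro f hf s hs
    exact hf.comp (f := fun ξ : ℝ => (ξ, s)) (by fun_prop) (fun ξ hξ => ⟨hξ, hs⟩)
  have ii : ∀ f : ℝ → ℝ, ContinuousOn f (Icc 0 1) →
      IntervalIntegrable f MeasureTheory.volume 0 1 := fun f hf =>
    ContinuousOn.intervalIntegrable_of_Icc zero_le_one hf
  have hσ1s : ContinuousOn (fun ξ => σ1 (v t) ξ) (Icc 0 1) :=
    (hσ1.comp (f := fun ξ : ℝ => (v t, ξ)) (by fun_prop)).continuousOn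
  have hVc := hV.continuousOn
  have hpc := hp.continuousOn
  have hσ0c := hσ0.continuousOn
  have hz1 := slice z hzc t htI
  have hz2 := slice zt hztc t htI
  have hz3 := slice zξ hzξc t htI
  -- derivative under the integral sign
  have hbd : ∃ C, ∀ q ∈ Icc (0:ℝ) 1 ×ˢ Icc (0:ℝ) T,
      ‖Sigma0 q.1 * (2 * z q.1 q.2 * zt q.1 q.2)‖ ≤ C := by
    apply (isCompact_Icc.prod isCompact_Icc).exists_bound_of_continuousOn
    have h1 : ContinuousOn (fun q : ℝ × ℝ => Sigma0 q.1) (Icc 0 1 ×ˢ Icc 0 T) :=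
      hSc.comp (f := fun q : ℝ × ℝ => q.1) (by fun_prop) (fun q hq => hq.1)
    exact h1.mul ((continuousOn_const.mul hzc).mul hztc)
  obtain ⟨C, hC⟩ := hbd
  have hu : uIoc (0:ℝ) 1 = Ioc 0 1 := uIoc_of_le zero_le_one
  have hder : HasDerivAt (fun s => ∫ ξ in (0:ℝ)..1, Sigma0 ξ * (z ξ s) ^ 2)
      (∫ ξ in (0:ℝ)..1, Sigma0 ξ * (2 * z ξ t * zt ξ t)) t := by
    refine (intervalIntegral.hasDerivAt_integral_of_dominated_loc_of_deriv_le
      (F := fun s ξ => Sigma0 ξ * (z ξ s) ^ 2)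
      (F' := fun s ξ => Sigma0 ξ * (2 * z ξ s * zt ξ s)) (bound := fun _ => C)
      (Ioo_mem_nhds ht.1 ht.2) ?_ ?_ ?_ ?_ ?_ ?_).2
    · filter_upwards [Ioo_mem_nhds ht.1 ht.2] with s hs
      exact (ii _ (hSc.mul ((slice z hzc s (Ioo_subset_Icc_self hs)).pow 2))).def'.aestronglyMeasurable
    · exact ii _ (hSc.mul (hz1.pow 2))
    · exact (ii _ (hSc.mul ((continuousOn_const.mul hz1).mul hz2))).def'.aestronglyMeasurable
    · refine Filter.Eventually.of_forall fun ξ hξ s hs => ?_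
      rw [hu] at hξ
      exact hC (ξ, s) ⟨Ioc_subset_Icc_self hξ, Ioo_subset_Icc_self hs⟩
    · exact intervalIntegrable_const
    · refine Filter.Eventually.of_forall fun ξ hξ s hs => ?_
      rw [hu] at hξ
      have h := (hzt ξ (Ioc_subset_Icc_self hξ) s (Ioo_subset_Icc_self hs)).hasDerivAt
        (Icc_mem_nhds hs.1 hs.2)
      have h2 := (h.pow 2).const_mul (Sigma0 ξ)
      refine h2.congr_deriv ?_
      simp
  have hWd : HasDerivAt W (L / 2 * ∫ ξ in (0:ℝ)..1, Sigma0 ξ * (2 * z ξ t * zt ξ t)) t := by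
    rw [show W = _ from funext hW]
    exact hder.const_mul (L / 2)
  refine ⟨hWd.differentiableAt, ?_⟩
  rw [hWd.deriv, hFb]
  -- integration by parts inequality
  have hibp : 0 ≤ ∫ ξ in (0:ℝ)..1, Sigma0 ξ * V ξ * (2 * z ξ t * zξ ξ t) := by
    have hcF : ContinuousOn (fun ξ => Sigma0 ξ * V ξ * (z ξ t) ^ 2) (Icc 0 1) :=
      (hSc.mul hVc).mul (hz1.pow 2)
    have hcφ : ContinuousOn (fun ξ => Sigma0 ξ * V ξ * (2 * z ξ t * zξ ξ t)) (Icc 0 1) :=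
      (hSc.mul hVc).mul ((continuousOn_const.mul hz1).mul hz3)
    have key := intervalIntegral.sub_le_integral_of_hasDeriv_right_of_le (zero_le_one (α := ℝ)) hcF
      (g' := fun ξ => (derivWithin Sigma0 (Icc 0 1) ξ * V ξ
          + Sigma0 ξ * derivWithin V (Icc 0 1) ξ) * (z ξ t) ^ 2
          + Sigma0 ξ * V ξ * (2 * z ξ t * zξ ξ t))
      (φ := fun ξ => Sigma0 ξ * V ξ * (2 * z ξ t * zξ ξ t)) ?_ hcφ.integrableOn_Icc ?_
    · have h1 : (1:ℝ) ∈ Icc (0:ℝ) 1 := by simp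
      have h2 := mul_nonneg (mul_nonneg (hSnn 1 h1) (hVpos 1 h1).le) (sq_nonneg (z 1 t))
      simp only [hBC t htI] at key
      linarith
    · intro ξ hξ
      have hm := Icc_mem_nhds hξ.1 hξ.2
      have hξ' := Ioo_subset_Icc_self hξ
      have a := ((hSd.differentiableOn one_ne_zero) ξ hξ').hasDerivWithinAt.hasDerivAt hm
      have b := ((hV.differentiableOn one_ne_zero) ξ hξ').hasDerivWithinAt.hasDerivAt hm
      have c := (hzξ ξ hξ' t htI).hasDerivAt hm
      have d := ((a.mul b).mul (c.pow 2)).hasDerivWithinAt (s := Ioi ξ)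
      refine d.congr_deriv ?_
      simp
    · intro ξ hξ
      have hξ' := Ioo_subset_Icc_self hξ
      have hVp := hVpos ξ hξ'
      have h := mul_le_mul_of_nonneg_right (hpassiv ξ hξ') hVp.le
      have e : -(Sigma0 ξ / V ξ) * derivWithin V (Icc 0 1) ξ * V ξ
          = -(Sigma0 ξ * derivWithin V (Icc 0 1) ξ) := by field_simp
      rw [e] at h
      have := mul_nonneg (sub_nonneg.2 h) (sq_nonneg (z ξ t))
      show _ ≤ _
      nlinarith
  have hint1 := ii (fun ξ => Sigma0 ξ * (2 * z ξ t * zt ξ t)) (hSc.mul ((continuousOn_const (c := (2:ℝ)).mul hz1).mul hz2))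
  have hint2 := ii (fun ξ => Sigma0 ξ * V ξ * (2 * z ξ t * zξ ξ t)) ((hSc.mul hVc).mul ((continuousOn_const (c := (2:ℝ)).mul hz1).mul hz3))
  have hint3 := ii _ (hpc.mul ((hσ0c.mul hz1).add (hσ1s.mul (hz2.add (hVc.mul hz3)))))
  have hmain : (∫ ξ in (0:ℝ)..1, (Sigma0 ξ * (2 * z ξ t * zt ξ t)
        + Sigma0 ξ * V ξ * (2 * z ξ t * zξ ξ t)))
      ≤ ∫ ξ in (0:ℝ)..1, 2 * v t *
        (p ξ * (σ0 ξ * z ξ t + σ1 (v t) ξ * (zt ξ t + V ξ * zξ ξ t))) := by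
    refine intervalIntegral.integral_mono_on_of_le_Ioo zero_le_one (hint1.add hint2)
      (hint3.const_mul (2 * v t)) fun ξ hξ => ?_
    have hξ' := Ioo_subset_Icc_self hξ
    have hD := hPDE ξ hξ t ht
    have hμp : 0 < μ (v t) := hμmin.trans_le (hμlb _)
    have hs := Real.sqrt_nonneg ((v t) ^ 2 + ε)
    have h1 := hσ1nn (v t) ξ
    have hgp : 0 < g (v t) ξ := by rw [hg]; positivity
    have hgD : g (v t) ξ * (zt ξ t + V ξ * zξ ξ t)
        = μ (v t) * v t - Real.sqrt ((v t) ^ 2 + ε) * (σ0 ξ * z ξ t) := by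
      rw [hD]; field_simp; ring
    have hge := hg (v t) ξ
    have hpn := hpnn ξ hξ'
    rw [hSigma0]
    generalize hDD : zt ξ t + V ξ * zξ ξ t = D at *
    generalize g (v t) ξ = G at *
    generalize Real.sqrt ((v t) ^ 2 + ε) = S at *
    have hpos : 0 ≤ σ0 ξ * z ξ t * v t + σ1 (v t) ξ * D * v t - σ0 ξ * z ξ t * D := by
      refine nonneg_of_mul_nonneg_right (a := G) ?_ hgp
      have : G * (σ0 ξ * z ξ t * v t + σ1 (v t) ξ * D * v t - σ0 ξ * z ξ t * D)
          = σ1 (v t) ξ * μ (v t) * (v t) ^ 2 + S * (σ0 ξ * z ξ t) ^ 2 := by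
        linear_combination (σ1 (v t) ξ * v t - σ0 ξ * z ξ t) * hgD
          + (σ0 ξ * z ξ t * v t) * hge
      rw [this]; positivity
    have := mul_nonneg hpn hpos
    have e : σ0 ξ * p ξ * (2 * z ξ t * zt ξ t) + σ0 ξ * p ξ * V ξ * (2 * z ξ t * zξ ξ t)
        = 2 * (p ξ * (σ0 ξ * z ξ t * D)) := by rw [← hDD]; ring
    rw [e]
    linarith
  rw [intervalIntegral.integral_add hint1 hint2, intervalIntegral.integral_const_mul] at hmain
  have := mul_le_mul_of_nonneg_left
    ((le_add_of_nonneg_right hibp).trans hmain) (half_pos hL).le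
  refine this.trans (le_of_eq ?_)
  ring
end

section
/- Under the same hypotheses (v continuous on [0,T]; V ∈ C¹([0,1];(0,∞)); p ∈ C¹([0,1];[0,∞)); σ0 ∈ C¹([0,1];[0,∞)); σ1 : ℝ×[0,1] → [0,∞) continuous; Σ0 := σ0·p satisfying dΣ0/dξ ≤ -(Σ0/V) dV/dξ on [0,1]; z ∈ C¹([0,1]×[0,T]; ℝ) with z(0,t) = 0 solving the distributed FrBD PDE pointwise), the distributed FrBD model is passive: with F_b(t) := L∫_0^1 p(ξ)(σ0(ξ) z(ξ,t) + σ1(v(t),ξ)(∂_t z + V(ξ)∂_ξ z)(ξ,t)) dξ and W(t) := (L/2)∫_0^1 Σ0(ξ) z(ξ,t)² dξ, the inequality ∫_0^t F_b(t') v(t') dt' ≥ W(t) - W(0) holds for all t ∈ [0,T]. -/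
open Set intervalIntegral

open MeasureTheory in
lemma aux_integrable_prod {a b c d : ℝ} (hab : a ≤ b) (hcd : c ≤ d) (F : ℝ → ℝ → ℝ)
    (hF : ContinuousOn (fun q : ℝ × ℝ => F q.1 q.2) (Icc a b ×ˢ Icc c d)) :
    Integrable (Function.uncurry F)
      ((volume.restrict (uIoc a b)).prod (volume.restrict (uIoc c d))) := by
  rw [Measure.prod_restrict, uIoc_of_le hab, uIoc_of_le hcd]
  have h1 : IntegrableOn (Function.uncurry F) (Icc a b ×ˢ Icc c d)
      ((volume : Measure ℝ).prod (volume : Measure ℝ)) := by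
    refine ContinuousOn.integrableOn_compact (isCompact_Icc.prod isCompact_Icc) ?_
    exact hF
  exact h1.mono_set (prod_mono Ioc_subset_Icc_self Ioc_subset_Icc_self)

open MeasureTheory in
lemma aux_param {a b c d : ℝ} (hab : a ≤ b) (hcd : c ≤ d) (F : ℝ → ℝ → ℝ)
    (hF : ContinuousOn (fun q : ℝ × ℝ => F q.1 q.2) (Icc a b ×ˢ Icc c d)) :
    IntervalIntegrable (fun s => ∫ x in a..b, F x s) volume c d := by
  have h := (aux_integrable_prod hab hcd F hF).integral_prod_right
  rw [intervalIntegrable_iff]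
  simp only [intervalIntegral.integral_of_le hab]
  rw [uIoc_of_le hab] at h
  exact h

lemma aux_alg (a m s0 s1 z D v g : ℝ) (ha : 0 < a) (hm : 0 < m) (hs1 : 0 ≤ s1)
    (hg : g = s1 * a + m) (hD : D = -(s0 * a / g) * z + (m / g) * v) :
    s0 * z * D ≤ (s0 * z + s1 * D) * v := by
  have hgp : 0 < g := by rw [hg]; positivity
  have h1 : g * D = -(s0 * a) * z + m * v := by rw [hD]; field_simp
  have h2 : a * (s0 * z + s1 * D) = m * (v - D) := by rw [hg] at h1; linarith
  have h3 : 0 ≤ a * ((s0 * z + s1 * D) * v - s0 * z * D) := by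
    have : a * ((s0 * z + s1 * D) * v - s0 * z * D)
        = m * (v - D) ^ 2 + a * (s1 * D ^ 2) := by
      linear_combination (v - D) * h2
    rw [this]; positivity
  have := nonneg_of_mul_nonneg_right h3 ha
  linarith

/-- Passivity (integral form) of the distributed FrBD model: under the micro-stiffness
condition `dΣ0/dξ ≤ -(Σ0/V) dV/dξ` on `[0,1]`, any `C¹` solution `z` of the distributed
FrBD PDE with boundary condition `z(0,t) = 0` satisfies
`∫_0^t F_b(t') v(t') dt' ≥ W(t) - W(0)` for all `t ∈ [0,T]`, where
`F_b(t) = L ∫_0^1 p (σ0 z + σ1(v)(∂_t z + V ∂_ξ z))` and `W(t) = (L/2) ∫_0^1 Σ0 z²`. -/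
theorem frbd_distributed_passivity_integral
    (T L ε μmin : ℝ) (hT : 0 < T) (hL : 0 < L) (hε : 0 < ε) (hμmin : 0 < μmin)
    (μ : ℝ → ℝ) (hμ : ContDiff ℝ 1 μ) (hμlb : ∀ w, μmin ≤ μ w)
    (v : ℝ → ℝ) (hv : ContinuousOn v (Icc 0 T))
    (V p σ0 : ℝ → ℝ)
    (hV : ContDiffOn ℝ 1 V (Icc 0 1)) (hVpos : ∀ ξ ∈ Icc (0 : ℝ) 1, 0 < V ξ)
    (hp : ContDiffOn ℝ 1 p (Icc 0 1)) (hpnn : ∀ ξ ∈ Icc (0 : ℝ) 1, 0 ≤ p ξ)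
    (hσ0 : ContDiffOn ℝ 1 σ0 (Icc 0 1)) (hσ0nn : ∀ ξ ∈ Icc (0 : ℝ) 1, 0 ≤ σ0 ξ)
    (σ1 : ℝ → ℝ → ℝ) (hσ1 : Continuous fun q : ℝ × ℝ => σ1 q.1 q.2)
    (hσ1nn : ∀ w ξ, 0 ≤ σ1 w ξ)
    (g : ℝ → ℝ → ℝ) (hg : ∀ w ξ, g w ξ = σ1 w ξ * Real.sqrt (w ^ 2 + ε) + μ w)
    (Sigma0 : ℝ → ℝ) (hSigma0 : ∀ ξ, Sigma0 ξ = σ0 ξ * p ξ)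
    (hpassiv : ∀ ξ ∈ Icc (0 : ℝ) 1,
      derivWithin Sigma0 (Icc 0 1) ξ ≤ -(Sigma0 ξ / V ξ) * derivWithin V (Icc 0 1) ξ)
    (z zt zξ : ℝ → ℝ → ℝ)
    (hzc : ContinuousOn (fun q : ℝ × ℝ => z q.1 q.2) (Icc 0 1 ×ˢ Icc 0 T))
    (hztc : ContinuousOn (fun q : ℝ × ℝ => zt q.1 q.2) (Icc 0 1 ×ˢ Icc 0 T))
    (hzξc : ContinuousOn (fun q : ℝ × ℝ => zξ q.1 q.2) (Icc 0 1 ×ˢ Icc 0 T))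
    (hzt : ∀ ξ ∈ Icc (0 : ℝ) 1, ∀ t ∈ Icc (0 : ℝ) T,
      HasDerivWithinAt (fun τ => z ξ τ) (zt ξ t) (Icc 0 T) t)
    (hzξ : ∀ ξ ∈ Icc (0 : ℝ) 1, ∀ t ∈ Icc (0 : ℝ) T,
      HasDerivWithinAt (fun x => z x t) (zξ ξ t) (Icc 0 1) ξ)
    (hBC : ∀ t ∈ Icc (0 : ℝ) T, z 0 t = 0)
    (hPDE : ∀ ξ ∈ Ioo (0 : ℝ) 1, ∀ t ∈ Ioo (0 : ℝ) T,
      zt ξ t + V ξ * zξ ξ t =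
        -(σ0 ξ * Real.sqrt ((v t) ^ 2 + ε) / g (v t) ξ) * z ξ t
          + (μ (v t) / g (v t) ξ) * v t)
    (Fb : ℝ → ℝ)
    (hFb : ∀ t, Fb t = L * ∫ ξ in (0 : ℝ)..1,
      p ξ * (σ0 ξ * z ξ t + σ1 (v t) ξ * (zt ξ t + V ξ * zξ ξ t)))
    (W : ℝ → ℝ)
    (hW : ∀ t, W t = L / 2 * ∫ ξ in (0 : ℝ)..1, Sigma0 ξ * (z ξ t) ^ 2) :
    ∀ t ∈ Icc (0 : ℝ) T, W t - W 0 ≤ ∫ s in (0 : ℝ)..t, Fb s * v s := by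
  intro t ht
  have ht0 : (0:ℝ) ≤ t := ht.1
  have hsub : Icc (0:ℝ) t ⊆ Icc 0 T := Icc_subset_Icc_right ht.2
  have hSd : ContDiffOn ℝ 1 Sigma0 (Icc 0 1) := by
    have : Sigma0 = fun ξ => σ0 ξ * p ξ := funext hSigma0
    rw [this]; exact hσ0.mul hp
  have hfst : MapsTo (Prod.fst : ℝ × ℝ → ℝ) (Icc (0:ℝ) 1 ×ˢ Icc 0 T) (Icc 0 1) := fun q hq => hq.1
  have hsnd : MapsTo (Prod.snd : ℝ × ℝ → ℝ) (Icc (0:ℝ) 1 ×ˢ Icc 0 T) (Icc 0 T) := fun q hq => hq.2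
  have cS : ContinuousOn (fun q : ℝ × ℝ => Sigma0 q.1) (Icc 0 1 ×ˢ Icc 0 T) :=
    hSd.continuousOn.comp continuousOn_fst hfst
  have cp : ContinuousOn (fun q : ℝ × ℝ => p q.1) (Icc 0 1 ×ˢ Icc 0 T) :=
    hp.continuousOn.comp continuousOn_fst hfst
  have cσ0 : ContinuousOn (fun q : ℝ × ℝ => σ0 q.1) (Icc 0 1 ×ˢ Icc 0 T) :=
    hσ0.continuousOn.comp continuousOn_fst hfst
  have cV : ContinuousOn (fun q : ℝ × ℝ => V q.1) (Icc 0 1 ×ˢ Icc 0 T) :=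
    hV.continuousOn.comp continuousOn_fst hfst
  have cv : ContinuousOn (fun q : ℝ × ℝ => v q.2) (Icc 0 1 ×ˢ Icc 0 T) :=
    hv.comp continuousOn_snd hsnd
  have cσ1 : ContinuousOn (fun q : ℝ × ℝ => σ1 (v q.2) q.1) (Icc 0 1 ×ˢ Icc 0 T) :=
    hσ1.comp_continuousOn (cv.prodMk continuousOn_fst)
  have slice : ∀ F : ℝ → ℝ → ℝ,
      ContinuousOn (fun q : ℝ × ℝ => F q.1 q.2) (Icc 0 1 ×ˢ Icc 0 T) →
      ∀ s ∈ Icc (0:ℝ) T, ContinuousOn (fun ξ => F ξ s) (Icc 0 1) := fun F hF s hs =>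
    hF.comp (f := fun ξ : ℝ => (ξ, s)) (by fun_prop) (fun ξ hξ => ⟨hξ, hs⟩)
  have slice2 : ∀ F : ℝ → ℝ → ℝ,
      ContinuousOn (fun q : ℝ × ℝ => F q.1 q.2) (Icc 0 1 ×ˢ Icc 0 T) →
      ∀ ξ ∈ Icc (0:ℝ) 1, ContinuousOn (fun s => F ξ s) (Icc 0 T) := fun F hF ξ hξ =>
    hF.comp (f := fun s : ℝ => (ξ, s)) (by fun_prop) (fun s hs => ⟨hξ, hs⟩)
  have ii : ∀ F : ℝ → ℝ → ℝ,
      ContinuousOn (fun q : ℝ × ℝ => F q.1 q.2) (Icc 0 1 ×ˢ Icc 0 T) →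
      ∀ s ∈ Icc (0:ℝ) T, IntervalIntegrable (fun ξ => F ξ s) MeasureTheory.volume 0 1 :=
    fun F hF s hs => (slice F hF s hs).intervalIntegrable_of_Icc zero_le_one
  have hmono : Icc (0:ℝ) 1 ×ˢ Icc 0 t ⊆ Icc (0:ℝ) 1 ×ˢ Icc 0 T := prod_mono le_rfl hsub
  -- the three integrands
  let H : ℝ → ℝ → ℝ := fun ξ s => Sigma0 ξ * (z ξ s * zt ξ s)
  let K : ℝ → ℝ → ℝ := fun ξ s => Sigma0 ξ * V ξ * (z ξ s * zξ ξ s)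
  let G : ℝ → ℝ → ℝ := fun ξ s =>
    p ξ * (σ0 ξ * z ξ s + σ1 (v s) ξ * (zt ξ s + V ξ * zξ ξ s)) * v s
  have cH : ContinuousOn (fun q : ℝ × ℝ => H q.1 q.2) (Icc 0 1 ×ˢ Icc 0 T) :=
    cS.mul (hzc.mul hztc)
  have cK : ContinuousOn (fun q : ℝ × ℝ => K q.1 q.2) (Icc 0 1 ×ˢ Icc 0 T) :=
    (cS.mul cV).mul (hzc.mul hzξc)
  have cG : ContinuousOn (fun q : ℝ × ℝ => G q.1 q.2) (Icc 0 1 ×ˢ Icc 0 T) :=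
    (cp.mul ((cσ0.mul hzc).add (cσ1.mul (hztc.add (cV.mul hzξc))))).mul cv
  have hFG : ∀ s, Fb s * v s = L * ∫ ξ in (0:ℝ)..1, G ξ s := by
    intro s
    simp only [G]
    rw [hFb, intervalIntegral.integral_mul_const]
    ring
  -- boundary term
  have hKnn : ∀ s ∈ Icc (0:ℝ) T, 0 ≤ ∫ ξ in (0:ℝ)..1, K ξ s := by
    intro s hs
    have cz := slice z hzc s hs
    have key := sub_le_integral_of_hasDeriv_right_of_le
      (g := fun ξ => Sigma0 ξ * V ξ * (z ξ s) ^ 2 / 2)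
      (g' := fun ξ => ((derivWithin Sigma0 (Icc 0 1) ξ * V ξ
          + Sigma0 ξ * derivWithin V (Icc 0 1) ξ) * (z ξ s) ^ 2
          + Sigma0 ξ * V ξ * (2 * z ξ s * zξ ξ s)) / 2)
      (φ := fun ξ => K ξ s) (zero_le_one' ℝ)
      (((hSd.continuousOn.mul hV.continuousOn).mul (cz.pow 2)).div_const 2)
      ?_ ((slice K cK s hs).integrableOn_Icc) ?_
    · have h1 : 0 ≤ Sigma0 1 * V 1 * (z 1 s) ^ 2 / 2 := by
        have a1 : (1:ℝ) ∈ Icc (0:ℝ) 1 := by simp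
        have := hpnn 1 a1
        have := hσ0nn 1 a1
        have := (hVpos 1 a1).le
        rw [hSigma0]; positivity
      simp only [hBC s hs] at key
      linarith
    · intro ξ hξ
      have hξ' := Ioo_subset_Icc_self hξ
      have nb : Icc (0:ℝ) 1 ∈ nhds ξ := Icc_mem_nhds hξ.1 hξ.2
      have dS := ((hSd.differentiableOn one_ne_zero ξ hξ').hasDerivWithinAt).hasDerivAt nb
      have dV := ((hV.differentiableOn one_ne_zero ξ hξ').hasDerivWithinAt).hasDerivAt nb
      have dz := (hzξ ξ hξ' s hs).hasDerivAt nb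
      have := (((dS.mul dV).mul (dz.pow 2)).div_const 2).hasDerivWithinAt (s := Ioi ξ)
      refine this.congr_deriv ?_
      push_cast
      simp
    · intro ξ hξ
      have hξ' := Ioo_subset_Icc_self hξ
      have hVp := hVpos ξ hξ'
      have h1 : derivWithin Sigma0 (Icc 0 1) ξ * V ξ
          + Sigma0 ξ * derivWithin V (Icc 0 1) ξ ≤ 0 := by
        have h := mul_le_mul_of_nonneg_right (hpassiv ξ hξ') hVp.le
        have e : -(Sigma0 ξ / V ξ) * derivWithin V (Icc 0 1) ξ * V ξ
            = - (Sigma0 ξ * derivWithin V (Icc 0 1) ξ) := by field_simp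
        rw [e] at h; linarith
      have h2 := mul_nonpos_of_nonpos_of_nonneg h1 (sq_nonneg (z ξ s))
      simp only [K]
      linarith
  -- differential inequality
  have hdiff : ∀ s ∈ Ioo (0:ℝ) T, ∫ ξ in (0:ℝ)..1, H ξ s ≤ ∫ ξ in (0:ℝ)..1, G ξ s := by
    intro s hs
    have hs' := Ioo_subset_Icc_self hs
    have h1 : ∫ ξ in (0:ℝ)..1, (H ξ s + K ξ s) ≤ ∫ ξ in (0:ℝ)..1, G ξ s := by
      refine integral_mono_on_of_le_Ioo zero_le_one ((ii H cH s hs').add (ii K cK s hs'))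
        (ii G cG s hs') ?_
      intro ξ hξ
      have hξ' := Ioo_subset_Icc_self hξ
      have ha : 0 < Real.sqrt ((v s) ^ 2 + ε) := Real.sqrt_pos.2 (by positivity)
      have h := aux_alg _ (μ (v s)) (σ0 ξ) (σ1 (v s) ξ) (z ξ s) _ (v s) _ ha
        (hμmin.trans_le (hμlb _)) (hσ1nn _ _) (hg (v s) ξ) (hPDE ξ hξ s hs)
      have h2 := mul_le_mul_of_nonneg_left h (hpnn ξ hξ')
      simp only [H, K, G, hSigma0]
      linarith
    rw [integral_add (ii H cH s hs') (ii K cK s hs')] at h1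
    linarith [hKnn s hs']
  -- energy identity
  have hWd : W t - W 0 = L * ∫ s in (0:ℝ)..t, ∫ ξ in (0:ℝ)..1, H ξ s := by
    have i0 : ∀ s ∈ Icc (0:ℝ) T,
        IntervalIntegrable (fun ξ => Sigma0 ξ * (z ξ s) ^ 2) MeasureTheory.volume 0 1 :=
      fun s hs => ii (fun ξ s => Sigma0 ξ * (z ξ s) ^ 2) (cS.mul (hzc.pow 2)) s hs
    have hswap : ∫ ξ in (0:ℝ)..1, ∫ s in (0:ℝ)..t, H ξ s
        = ∫ s in (0:ℝ)..t, ∫ ξ in (0:ℝ)..1, H ξ s := by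
      apply MeasureTheory.intervalIntegral_intervalIntegral_swap
      have := aux_integrable_prod zero_le_one ht0 H (cH.mono hmono)
      rwa [MeasureTheory.Measure.prod_restrict] at this
    rw [hW, hW, ← mul_sub, ← integral_sub (i0 t ht) (i0 0 ⟨le_rfl, hT.le⟩),
      ← hswap,
      div_mul_eq_mul_div, mul_div_assoc]
    congr 1
    rw [← intervalIntegral.integral_div]
    refine integral_congr fun ξ hξ => ?_
    rw [uIcc_of_le zero_le_one] at hξ
    have key := integral_eq_sub_of_hasDerivAt_of_le (f := fun s => Sigma0 ξ * (z ξ s) ^ 2 / 2)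
      (f' := fun s => H ξ s) ht0
      (((continuousOn_const.mul ((slice2 z hzc ξ hξ).pow 2)).div_const 2).mono hsub) ?_
      (((slice2 H cH ξ hξ).mono hsub).intervalIntegrable_of_Icc ht0)
    · simp only [key]; ring
    · intro s hs
      have hsT : s ∈ Ioo (0:ℝ) T := ⟨hs.1, hs.2.trans_le ht.2⟩
      have dz := (hzt ξ hξ s (Ioo_subset_Icc_self hsT)).hasDerivAt (Icc_mem_nhds hsT.1 hsT.2)
      refine (((dz.pow 2).const_mul (Sigma0 ξ)).div_const 2).congr_deriv ?_
      simp only [H]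
      push_cast
      ring
  rw [hWd]
  simp only [hFG]
  rw [intervalIntegral.integral_const_mul]
  refine mul_le_mul_of_nonneg_left ?_ hL.le
  exact integral_mono_on_of_le_Ioo ht0 (aux_param zero_le_one ht0 H (cH.mono hmono))
    (aux_param zero_le_one ht0 G (cG.mono hmono))
    (fun s hs => hdiff s ⟨hs.1, hs.2.trans_le ht.2⟩)
end
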